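/- Let w ∈ S_n and fix an antidiagonal index r. If (i₁,j₁), (i₂,j₂) ∈ D(w) satisfy i₁ + j₁ − r_w(i₁,j₁) = i₂ + j₂ − r_w(i₂,j₂) = r (same antidiagonal of B_w under the bijection (i,j) ↦ (i, j − r_w(i,j))), then i₁ < i₂ if and only if j₁ > j₂. -/

import Mathlib

open Finset

/-- The Rothe diagram of a permutation (0-based coordinates). -/
def Rothe {n : ℕ} (w : Equiv.Perm (Fin n)) : Finset (Fin n × Fin n) :=
  Finset.univ.filter (fun p => p.2 < w p.1 ∧ p.1 < w⁻¹ p.2)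

/-- The rank function r_w(i,j) = #{k : k ≤ i and w(k) ≤ j}. -/
def rk {n : ℕ} (w : Equiv.Perm (Fin n)) (i j : Fin n) : ℕ :=
  (Finset.univ.filter (fun k => k ≤ i ∧ w k ≤ j)).card

/-- m_i(w) = #{j : j > i and w(j) < w(i)}. -/
def mrow {n : ℕ} (w : Equiv.Perm (Fin n)) (i : Fin n) : ℕ :=
  (Finset.univ.filter (fun j => i < j ∧ w j < w i)).card

/-- The set of 132-patterns of w. -/
def P132 {n : ℕ} (w : Equiv.Perm (Fin n)) : Finset (Fin n × Fin n × Fin n) :=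
  Finset.univ.filter
    (fun t => t.1 < t.2.1 ∧ t.2.1 < t.2.2 ∧ w t.1 < w t.2.2 ∧ w t.2.2 < w t.2.1)

theorem rk_le_aux {n : ℕ} (w : Equiv.Perm (Fin n)) (i j : Fin n)
    (h : (i, j) ∈ Rothe w) : rk w i j ≤ (j : ℕ) := by
  simp only [Rothe, Finset.mem_filter, Finset.mem_univ, true_and] at h
  have hs : (Finset.univ.filter (fun k => k ≤ i ∧ w k ≤ j)) ⊆
      (Finset.Iio j).image (fun x => w⁻¹ x) := by
    intro k hk
    simp only [Finset.mem_filter, Finset.mem_univ, true_and] at hk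
    refine Finset.mem_image.2 ⟨w k, Finset.mem_Iio.2 (lt_of_le_of_ne hk.2 ?_), by simp⟩
    intro e
    rw [← e] at h
    simp at h
    exact absurd hk.1 (not_le.2 h.2)
  have := (Finset.card_le_card hs).trans Finset.card_image_le
  simpa [rk] using this

theorem rk_mono_aux {n : ℕ} (w : Equiv.Perm (Fin n)) (i₁ j₁ i₂ j₂ : Fin n)
    (h : (i₂, j₂) ∈ Rothe w) :
    rk w i₂ j₂ ≤ rk w i₁ j₁ + (((i₂ : ℕ) - i₁ - 1) + ((j₂ : ℕ) - j₁ - 1)) := by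
  simp only [Rothe, Finset.mem_filter, Finset.mem_univ, true_and] at h
  have hs : (Finset.univ.filter (fun k => k ≤ i₂ ∧ w k ≤ j₂)) ⊆
      (Finset.univ.filter (fun k => k ≤ i₁ ∧ w k ≤ j₁)) ∪
      (Finset.Ioo i₁ i₂ ∪ (Finset.Ioo j₁ j₂).image (fun x => w⁻¹ x)) := by
    intro k hk
    simp only [Finset.mem_filter, Finset.mem_univ, true_and] at hk
    have a : k ≠ i₂ := by
      rintro rfl
      exact absurd hk.2 (not_le.2 h.1)
    have b : w k ≠ j₂ := by
      intro e
      rw [← e] at h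
      simp at h
      exact absurd hk.1 (not_le.2 h.2)
    have a' := lt_of_le_of_ne hk.1 a
    have b' := lt_of_le_of_ne hk.2 b
    by_cases c : k ≤ i₁
    · by_cases d : w k ≤ j₁
      · simp [c, d]
      · refine Finset.mem_union_right _ (Finset.mem_union_right _ ?_)
        exact Finset.mem_image.2 ⟨w k, Finset.mem_Ioo.2 ⟨not_le.1 d, b'⟩, by simp⟩
    · refine Finset.mem_union_right _ (Finset.mem_union_left _ ?_)
      exact Finset.mem_Ioo.2 ⟨not_le.1 c, a'⟩
  refine (Finset.card_le_card hs).trans ((Finset.card_union_le _ _).trans ?_)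
  refine Nat.add_le_add le_rfl ((Finset.card_union_le _ _).trans ?_)
  refine Nat.add_le_add (by simp) (Finset.card_image_le.trans (by simp))

/-- Cells of D(w) mapped to the same antidiagonal of B_w under
(i,j) ↦ (i, j − r_w(i,j)) are ordered oppositely in rows and columns. -/
theorem stmt14 {n : ℕ} (w : Equiv.Perm (Fin n)) (i₁ j₁ i₂ j₂ : Fin n)
    (h1 : (i₁, j₁) ∈ Rothe w) (h2 : (i₂, j₂) ∈ Rothe w)
    (hd : (i₁ : ℕ) + ((j₁ : ℕ) - rk w i₁ j₁) = (i₂ : ℕ) + ((j₂ : ℕ) - rk w i₂ j₂)) :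
    i₁ < i₂ ↔ j₂ < j₁ := by
  have a1 := rk_le_aux w _ _ h1
  have a2 := rk_le_aux w _ _ h2
  have b1 := rk_mono_aux w i₂ j₂ _ _ h1
  have b2 := rk_mono_aux w i₁ j₁ _ _ h2
  simp only [Fin.lt_def]
  omega
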